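/- Let L and K be two Hopf subalgebras of H. For any finite-dimensional left K-module M there is a canonical epimorphism of L-modules π_M : ⊕_{C ∈ L\H/K} (L ⊗_{L ∩ {}^C K} {}^C M) → H ⊗_K M, given on the component indexed by C by l ⊗_{L ∩ {}^C K} v ↦ lv for l ∈ L and v ∈ {}^C M, where the target H ⊗_K M is the induced module M↑_K^H restricted to L. -/

import Mathlib

open TensorProduct

namespace MackeyPaper

noncomputable section

universe v

variable (k : Type) [Field k] [CharZero k] [IsAlgClosed k]
variable (H : Type) [Ring H] [HopfAlgebra k H]

/-- A subcoalgebra of `H`: a `k`-subspace `C` with `Δ(C) ⊆ C ⊗ C`. -/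
def IsSubcoalgebra (C : Submodule k H) : Prop :=
  ∀ c ∈ C, Coalgebra.comul (R := k) c ∈
    LinearMap.range (TensorProduct.map C.subtype C.subtype)

/-- A simple (nonzero, minimal) subcoalgebra of `H`. -/
def IsSimpleSubcoalgebra (C : Submodule k H) : Prop :=
  IsSubcoalgebra k H C ∧ C ≠ ⊥ ∧
    ∀ D : Submodule k H, D ≤ C → IsSubcoalgebra k H D → D ≠ ⊥ → D = C

/-- A Hopf subalgebra of `H`: a subalgebra which is a subcoalgebra and is
stable under the antipode. -/
def IsHopfSubalgebra (K : Subalgebra k H) : Prop :=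
  IsSubcoalgebra k H K.toSubmodule ∧ ∀ x ∈ K, HopfAlgebra.antipode (R := k) x ∈ K

/-- `Λ` is the (two-sided) idempotent integral of the Hopf subalgebra `K`,
i.e. the integral normalized by `ε(Λ) = 1`. -/
def IsIdempotentIntegral (K : Subalgebra k H) (Λ : H) : Prop :=
  Λ ∈ K ∧ Coalgebra.counit (R := k) Λ = 1 ∧
    ∀ x ∈ K, x * Λ = Coalgebra.counit (R := k) x • Λ ∧
      Λ * x = Coalgebra.counit (R := k) x • Λ

/-- A cocommutative element of `H`; the cocommutative elements of `H` form
the character ring `C(H^*)`. -/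
def IsCocomm (x : H) : Prop :=
  (TensorProduct.comm k H H) (Coalgebra.comul (R := k) x) = Coalgebra.comul (R := k) x

/-- The character ring `C(H^*)`, i.e. the space of cocommutative elements of `H`,
as a `k`-subspace of `H`. -/
def charRing : Submodule k H :=
  LinearMap.ker ((TensorProduct.comm k H H).toLinearMap ∘ₗ Coalgebra.comul (R := k)
      - Coalgebra.comul (R := k))

/-- `d` is the irreducible character (of `H^*`) associated to the simple
subcoalgebra `C`: the unique cocommutative element of `C` whose counit is the
positive square root of `dim_k C`. -/
def IsCharacterOf (d : H) (C : Submodule k H) : Prop :=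
  d ∈ C ∧ IsCocomm k H d ∧
    Coalgebra.counit (R := k) d = ((Nat.sqrt (Module.finrank k ↥C) : ℕ) : k)

/-- The right coset `CK` of a subcoalgebra `C`, i.e. the subspace `C·K`. -/
def CKsub (K : Subalgebra k H) (C : Submodule k H) : Submodule k H :=
  C * K.toSubmodule

/-- The conjugate Hopf subalgebra `ᶜK` of `K` by a simple subcoalgebra `C`
(with associated irreducible character `c`): the span of all simple
subcoalgebras of `H` whose irreducible character `d` satisfies
`d·c·Λ_K = ε(d)·c·Λ_K`.  (The condition is stated for all cocommutative
elements of `C` resp. `D`; this is equivalent, since the cocommutative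
elements of a simple subcoalgebra are exactly the scalar multiples of its
irreducible character.) -/
def conjK (K : Subalgebra k H) (Λ : H) (C : Submodule k H) : Submodule k H :=
  sSup {D : Submodule k H | IsSimpleSubcoalgebra k H D ∧
    ∀ d ∈ D, IsCocomm k H d → ∀ c ∈ C, IsCocomm k H c →
      d * (c * Λ) = Coalgebra.counit (R := k) d • (c * Λ)}

/-- A complete irredundant system of representatives (by simple subcoalgebras)
of the double cosets `L\H/K`.  (Taking `L = ⊥` gives a system of
representatives of the right cosets `H/K`.) -/
def IsDoubleCosetReps (L K : Subalgebra k H) {ι : Type} (rep : ι → Submodule k H) : Prop :=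
  (∀ i, IsSimpleSubcoalgebra k H (rep i)) ∧
  (∀ i j, L.toSubmodule * rep i * K.toSubmodule = L.toSubmodule * rep j * K.toSubmodule
      → i = j) ∧
  (∀ C : Submodule k H, IsSimpleSubcoalgebra k H C →
      ∃ i, C ≤ L.toSubmodule * rep i * K.toSubmodule)

section Ind

variable (K : Subalgebra k H) (M : Type v) [AddCommGroup M] [Module k M]
  [Module ↥K M] [IsScalarTower k ↥K M]

/-- The relations defining the induced module `H ⊗_K M` as a quotient of
`H ⊗_k M`: the `H`-submodule generated by the elements `a ⊗ m - 1 ⊗ a·m`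
for `a ∈ K` (equivalently, spanned by all `h·a ⊗ m - h ⊗ a·m`). -/
def indRel : Submodule H (H ⊗[k] M) :=
  Submodule.span H {z | ∃ (a : ↥K) (m : M),
    z = (a : H) ⊗ₜ[k] m - (1 : H) ⊗ₜ[k] (a • m)}

/-- The induced module `M↑_K^H = H ⊗_K M`, a left `H`-module. -/
abbrev Ind := (H ⊗[k] M) ⧸ indRel k H K M

variable (C : Submodule k H)

/-- The underlying space `CK ⊗_k M` of which the conjugate module `ᶜM` is a
quotient. -/
def CKM : Type _ := ↥(CKsub k H K C) ⊗[k] M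

instance : AddCommGroup (CKM k H K M C) :=
  inferInstanceAs (AddCommGroup (↥(CKsub k H K C) ⊗[k] M))

instance : Module k (CKM k H K M C) :=
  inferInstanceAs (Module k (↥(CKsub k H K C) ⊗[k] M))

/-- The pure tensor `x ⊗ m` as an element of `CK ⊗_k M`. -/
def ckmk (x : ↥(CKsub k H K C)) (m : M) : CKM k H K M C := x ⊗ₜ[k] m

/-- The relations defining the conjugate module `ᶜM = CK ⊗_K M` as a quotient
of `CK ⊗_k M`: `x·a ⊗ m - x ⊗ a·m` for `a ∈ K`. -/
def conjRel : Submodule k (CKM k H K M C) :=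
  Submodule.span k {z | ∃ (x : ↥(CKsub k H K C)) (a : ↥K) (m : M)
    (hxa : (x : H) * (a : H) ∈ CKsub k H K C),
    z = ckmk k H K M C ⟨(x : H) * (a : H), hxa⟩ m - ckmk k H K M C x (a • m)}

/-- The conjugate module `ᶜM := CK ⊗_K M`. -/
abbrev ConjM := CKM k H K M C ⧸ conjRel k H K M C

/-- The canonical copy of the conjugate module `ᶜM = CK ⊗_K M` inside
`H ⊗_K M` (the image of `CK ⊗_K M` under multiplication; this is indeed a
copy of `ᶜM` since `H` is a free right `K`-module and `CK` is one of the
coset summands). -/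
def conjMsub : Submodule k (Ind k H K M) :=
  Submodule.span k {z | ∃ (x : H) (_ : x ∈ CKsub k H K C) (m : M),
    z = Submodule.Quotient.mk (x ⊗ₜ[k] m)}

end Ind

section Comp

variable (L K : Subalgebra k H) (Λ : H) (C : Submodule k H)
variable (M : Type v) [AddCommGroup M] [Module k M] [Module ↥K M] [IsScalarTower k ↥K M]

/-- The underlying space `L ⊗_k (CK ⊗_k M)`. -/
def LCM : Type _ := ↥L ⊗[k] CKM k H K M C

instance : AddCommGroup (LCM k H L K C M) :=
  inferInstanceAs (AddCommGroup (↥L ⊗[k] CKM k H K M C))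

instance : Module k (LCM k H L K C M) :=
  inferInstanceAs (Module k (↥L ⊗[k] CKM k H K M C))

/-- The pure tensor `l ⊗ w` as an element of `L ⊗_k (CK ⊗_k M)`. -/
def lcmk (l : ↥L) (w : CKM k H K M C) : LCM k H L K C M := l ⊗ₜ[k] w

/-- The relations defining `L ⊗_{L ∩ ᶜK} ᶜM` as a quotient of
`L ⊗_k (CK ⊗_k M)`: the balancedness relations over `L ∩ ᶜK` (first set),
together with (the image of) the relations defining `ᶜM = CK ⊗_K M`
(second set). -/
def compRel : Submodule k (LCM k H L K C M) :=
  Submodule.span k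
    ({z | ∃ (l : ↥L) (a : H) (haL : a ∈ L) (_ : a ∈ conjK k H K Λ C)
        (x : ↥(CKsub k H K C)) (m : M) (hax : a * (x : H) ∈ CKsub k H K C),
        z = lcmk k H L K C M ⟨(l : H) * a, mul_mem l.2 haL⟩ (ckmk k H K M C x m)
          - lcmk k H L K C M l (ckmk k H K M C ⟨a * (x : H), hax⟩ m)} ∪
     {z | ∃ (l : ↥L) (x : ↥(CKsub k H K C)) (a : ↥K) (m : M)
        (hxa : (x : H) * (a : H) ∈ CKsub k H K C),
        z = lcmk k H L K C M l (ckmk k H K M C ⟨(x : H) * (a : H), hxa⟩ m)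
          - lcmk k H L K C M l (ckmk k H K M C x (a • m))})

/-- The module `L ⊗_{L ∩ ᶜK} ᶜM` (a left `L`-module via multiplication on the
first tensor factor). -/
abbrev Comp := LCM k H L K C M ⧸ compRel k H L K Λ C M

end Comp

open DirectSum

section Mackey

variable (L K : Subalgebra k H) (Λ : H)

/-- The Mackey isomorphism property for the pair `(L, K)` at the `K`-module
`M`: for any system of double coset representatives, the left-multiplication
map `⊕_C L ⊗_{L ∩ ᶜK} ᶜM → M↑_K^H↓_L^H`, `l ⊗ v ↦ l·v`, is an isomorphism of
`L`-modules.  (A `k`-linear map satisfying the displayed formula on the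
spanning elements is automatically `L`-equivariant for the evident
`L`-actions, so this property is stated for `k`-linear maps.) -/
def MackeyAt (M : Type v) [AddCommGroup M] [Module k M] [Module ↥K M]
    [IsScalarTower k ↥K M] [Module.Finite k M] : Prop :=
  ∀ (ι : Type) [DecidableEq ι] (rep : ι → Submodule k H),
    IsDoubleCosetReps k H L K rep →
    ∃ π : (⨁ i : ι, Comp k H L K Λ (rep i) M) →ₗ[k] Ind k H K M,
      Function.Bijective π ∧
      ∀ (i : ι) (l : ↥L) (x : ↥(CKsub k H K (rep i))) (m : M),
        π (DirectSum.of (fun i => Comp k H L K Λ (rep i) M) i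
            (Submodule.Quotient.mk (lcmk k H L K (rep i) M l (ckmk k H K M (rep i) x m)))) =
          Submodule.Quotient.mk (((l : H) * (x : H)) ⊗ₜ[k] m)

/-- `(L, K)` is a Mackey pair of Hopf subalgebras of `H` (here `Λ` is the
idempotent integral of `K`): for every finite-dimensional `K`-module `M` the
left-multiplication homomorphism `π_M` is an isomorphism. -/
def IsMackeyPair : Prop :=
  ∀ (M : Type v) [AddCommGroup M] [Module k M] [Module ↥K M]
    [IsScalarTower k ↥K M] [Module.Finite k M], MackeyAt k H L K Λ M

end Mackey


section HopfIntegrals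

open Coalgebra HopfAlgebra WithConv

variable {F A : Type*} [Field F] [Ring A] [HopfAlgebra F A]

lemma sum_counit_right_smul {x : A} {ι : Type*} (r : Coalgebra.Repr F x ι) :
    ∑ i ∈ r.index, counit (R := F) (r.right i) • r.left i = x := by
  have h := congr(TensorProduct.rid F A $(sum_tmul_counit_eq r))
  simpa only [map_sum, TensorProduct.rid_tmul, one_smul] using h

/-- A linear functional on `A`, viewed as a linear endomorphism of `A` with scalar values, as an
element of the convolution algebra. -/
def scalarConv (f : A →ₗ[F] F) : WithConv (A →ₗ[F] A) :=
  toConv (Algebra.linearMap F A ∘ₗ f)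

lemma scalarConv_apply (f : A →ₗ[F] F) (x : A) : scalarConv f x = f x • (1 : A) :=
  Algebra.algebraMap_eq_smul_one _

lemma conv_mul_scalarConv_apply (T : A →ₗ[F] A) (f : A →ₗ[F] F) {x : A} {ι : Type*}
    (r : Coalgebra.Repr F x ι) :
    (toConv T * scalarConv f) x = ∑ i ∈ r.index, f (r.right i) • T (r.left i) := by
  rw [r.convMul_apply]
  simp [scalarConv_apply]

lemma scalarConv_mul_conv_apply (T : A →ₗ[F] A) (f : A →ₗ[F] F) {x : A} {ι : Type*}
    (r : Coalgebra.Repr F x ι) :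
    (scalarConv f * toConv T) x = ∑ i ∈ r.index, f (r.left i) • T (r.right i) := by
  rw [r.convMul_apply]
  simp [scalarConv_apply]

lemma scalarConv_mul (f g : WithConv (A →ₗ[F] F)) :
    scalarConv (f * g).ofConv = scalarConv f.ofConv * scalarConv g.ofConv :=
  toConv_injective.eq_iff.mpr (LinearMap.algHom_comp_convMul_distrib (Algebra.ofId F A) f g)

lemma algHom_comp_mul_antipode {B : Type*} [Ring B] [Algebra F B] (φ : A →ₐ[F] B) :
    toConv φ.toLinearMap * toConv (φ.toLinearMap ∘ₗ antipode F) = 1 := by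
  have h := LinearMap.algHom_comp_convMul_distrib φ (toConv (LinearMap.id : A →ₗ[F] A))
    (toConv (antipode F))
  rw [LinearMap.id_mul_antipode] at h
  apply ofConv_injective
  simp only [LinearMap.comp_id] at h
  rw [← h]
  ext x
  simp

lemma algHom_comp_antipode_mul {B : Type*} [Ring B] [Algebra F B] (φ : A →ₐ[F] B) :
    toConv (φ.toLinearMap ∘ₗ antipode F) * toConv φ.toLinearMap = 1 := by
  have h := LinearMap.algHom_comp_convMul_distrib φ (toConv (antipode F))
    (toConv (LinearMap.id : A →ₗ[F] A))
  rw [LinearMap.antipode_mul_id] at h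
  apply ofConv_injective
  simp only [LinearMap.comp_id] at h
  rw [← h]
  ext x
  simp

variable (F A) in
/-- The map `x ↦ x ⊗ 1`, in the convolution algebra. -/
def convLeft : WithConv (A →ₗ[F] A ⊗[F] A) :=
  toConv (Algebra.TensorProduct.includeLeft : A →ₐ[F] A ⊗[F] A).toLinearMap

variable (F A) in
/-- The map `x ↦ 1 ⊗ x`, in the convolution algebra. -/
def convRight : WithConv (A →ₗ[F] A ⊗[F] A) :=
  toConv (Algebra.TensorProduct.includeRight : A →ₐ[F] A ⊗[F] A).toLinearMap

variable (F A) in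
/-- The map `x ↦ S x ⊗ 1`, in the convolution algebra. -/
def convLeftAntipode : WithConv (A →ₗ[F] A ⊗[F] A) :=
  toConv ((Algebra.TensorProduct.includeLeft : A →ₐ[F] A ⊗[F] A).toLinearMap ∘ₗ antipode F)

variable (F A) in
/-- The map `x ↦ 1 ⊗ S x`, in the convolution algebra. -/
def convRightAntipode : WithConv (A →ₗ[F] A ⊗[F] A) :=
  toConv ((Algebra.TensorProduct.includeRight : A →ₐ[F] A ⊗[F] A).toLinearMap ∘ₗ antipode F)

lemma convLeft_mul_convRight : convLeft F A * convRight F A = toConv comul := by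
  ext x
  rw [(ℛ F x).convMul_apply]
  simp [convLeft, convRight, (ℛ F x).eq]

lemma convLeft_mul_convLeftAntipode : convLeft F A * convLeftAntipode F A = 1 :=
  algHom_comp_mul_antipode _

lemma convLeftAntipode_mul_convLeft : convLeftAntipode F A * convLeft F A = 1 :=
  algHom_comp_antipode_mul _

lemma convRightAntipode_mul_convRight : convRightAntipode F A * convRight F A = 1 :=
  algHom_comp_antipode_mul _

/-- The antipode is anti-comultiplicative. -/
lemma convRightAntipode_mul_convLeftAntipode :
    convRightAntipode F A * convLeftAntipode F A = toConv (comul ∘ₗ antipode F) := by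
  refine left_inv_eq_right_inv (a := toConv comul) ?_ LinearMap.comul_right_inv
  rw [← convLeft_mul_convRight, mul_assoc, ← mul_assoc (convLeftAntipode F A),
    convLeftAntipode_mul_convLeft, one_mul, convRightAntipode_mul_convRight]

lemma comul_antipode {x : A} {ι : Type*} (r : Coalgebra.Repr F x ι) :
    comul (R := F) (antipode F x) =
      ∑ i ∈ r.index, antipode F (r.right i) ⊗ₜ[F] antipode F (r.left i) := by
  have h := congr($(convRightAntipode_mul_convLeftAntipode (F := F) (A := A)) x)
  rw [r.convMul_apply] at h
  simpa [convLeftAntipode, convRightAntipode] using h.symm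

/-- A representation of the comultiplication of `S x`. -/
def reprAntipode {x : A} {ι : Type*} (r : Coalgebra.Repr F x ι) :
    Coalgebra.Repr F (antipode F x) ι where
  left i := antipode F (r.right i)
  right i := antipode F (r.left i)
  index := r.index
  eq := (comul_antipode r).symm

/-- A linear functional `lam` on a Hopf algebra is a left integral if `h₁ lam(h₂) = lam(h) 1`. -/
def IsLeftIntegral (lam : A →ₗ[F] F) : Prop :=
  toConv (LinearMap.id : A →ₗ[F] A) * scalarConv lam = scalarConv lam

/-- `y₁ lam(x y₂) = S(x₁) lam(x₂ y)` for a left integral `lam`. -/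
lemma IsLeftIntegral.antipode_mul {lam : A →ₗ[F] F} (hlam : IsLeftIntegral lam) (x y : A) :
    (toConv (antipode F : A →ₗ[F] A) * scalarConv (lam ∘ₗ LinearMap.mulRight F y)) x =
      (toConv (LinearMap.id : A →ₗ[F] A) * scalarConv (lam ∘ₗ LinearMap.mulLeft F x)) y := by
  let P : WithConv (A →ₗ[F] A) := toConv
    { toFun := fun x =>
        (toConv (LinearMap.id : A →ₗ[F] A) * scalarConv (lam ∘ₗ LinearMap.mulLeft F x)) y
      map_add' := fun a b => by
        simp [conv_mul_scalarConv_apply _ _ (ℛ F y), add_mul, add_smul, Finset.sum_add_distrib]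
      map_smul' := fun c a => by
        simp [conv_mul_scalarConv_apply _ _ (ℛ F y), Finset.smul_sum, mul_smul] }
  have h1 : toConv (LinearMap.id : A →ₗ[F] A) * P = scalarConv (lam ∘ₗ LinearMap.mulRight F y) := by
    ext x
    have h2 := congr($hlam (x * y))
    rw [conv_mul_scalarConv_apply _ _ ((ℛ F x).mul (ℛ F y))] at h2
    rw [(ℛ F x).convMul_apply]
    simpa [P, conv_mul_scalarConv_apply _ _ (ℛ F y), scalarConv_apply, Finset.sum_product,
      Finset.mul_sum] using h2
  rw [← h1, ← mul_assoc, LinearMap.antipode_mul_id, one_mul]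
  rfl

lemma eq_of_forall_map_dual [FiniteDimensional F A] {z w : A ⊗[F] A}
    (h : ∀ φ ψ : A →ₗ[F] F, LinearMap.mul' F F (TensorProduct.map φ ψ z) =
      LinearMap.mul' F F (TensorProduct.map φ ψ w)) : z = w := by
  let b := Module.finBasis F A
  refine (b.tensorProduct b).ext_elem fun ⟨i, j⟩ => ?_
  have key : ∀ z : A ⊗[F] A, (b.tensorProduct b).repr z (i, j) =
      LinearMap.mul' F F (TensorProduct.map (b.coord i) (b.coord j) z) := by
    intro z
    induction z with
    | zero => simp
    | add x y hx hy => simp [hx, hy]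
    | tmul x y => simp [mul_comm]
  rw [key, key, h]

section RightIntegral

variable {lam : A →ₗ[F] F} (hlam : IsLeftIntegral lam) {Λ : A}
  (hΛ : ∀ x, Λ * x = counit (R := F) x • Λ) (hlamΛ : lam Λ = 1)

include hlam hΛ hlamΛ

lemma IsLeftIntegral.eq_antipode_sum (y : A) :
    (toConv (antipode F : A →ₗ[F] A) * scalarConv (lam ∘ₗ LinearMap.mulRight F y)) Λ = y := by
  rw [hlam.antipode_mul, conv_mul_scalarConv_apply _ _ (ℛ F y)]
  simp only [LinearMap.comp_apply, LinearMap.mulLeft_apply, hΛ, map_smul, hlamΛ,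
    smul_eq_mul, mul_one, LinearMap.id_apply]
  exact sum_counit_right_smul (ℛ F y)

lemma IsLeftIntegral.antipode_surjective : Function.Surjective (antipode F (A := A)) := by
  intro y
  refine ⟨∑ i ∈ (ℛ F Λ).index, lam ((ℛ F Λ).right i * y) • (ℛ F Λ).left i, ?_⟩
  have := hlam.eq_antipode_sum hΛ hlamΛ y
  rw [conv_mul_scalarConv_apply _ _ (ℛ F Λ)] at this
  simpa using this

lemma IsLeftIntegral.eq_zero_of_forall_mul_right {y : A} (hy : ∀ a, lam (a * y) = 0) : y = 0 := by
  rw [← hlam.eq_antipode_sum hΛ hlamΛ y, conv_mul_scalarConv_apply _ _ (ℛ F Λ)]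
  simp [hy]

section FiniteDimensional

variable [FiniteDimensional F A]

lemma IsLeftIntegral.antipode_injective : Function.Injective (antipode F (A := A)) :=
  LinearMap.injective_iff_surjective.mpr (hlam.antipode_surjective hΛ hlamΛ)

lemma IsLeftIntegral.exists_eq_mul_right (μ : A →ₗ[F] F) : ∃ a, ∀ x, μ x = lam (x * a) := by
  have hinj : Function.Injective (LinearMap.compr₂ (LinearMap.mul F A) lam).flip := by
    rw [← LinearMap.ker_eq_bot, LinearMap.ker_eq_bot']
    intro y hy
    exact hlam.eq_zero_of_forall_mul_right hΛ hlamΛ fun a => by simpa using congr($hy a)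
  obtain ⟨a, ha⟩ := (LinearMap.injective_iff_surjective_of_finrank_eq_finrank
    (Subspace.dual_finrank_eq (K := F) (V := A)).symm).mp hinj μ
  exact ⟨a, fun x => by rw [← ha]; simp⟩

lemma IsLeftIntegral.eq_zero_of_forall_mul_left {a : A} (ha : ∀ y, lam (a * y) = 0) : a = 0 := by
  rw [← Module.forall_dual_apply_eq_zero_iff F]
  intro μ
  obtain ⟨b, hb⟩ := hlam.exists_eq_mul_right hΛ hlamΛ μ
  rw [hb, ha]

lemma IsLeftIntegral.exists_eq_mul_left (μ : A →ₗ[F] F) : ∃ a, ∀ x, μ x = lam (a * x) := by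
  have hinj : Function.Injective (LinearMap.compr₂ (LinearMap.mul F A) lam) := by
    rw [← LinearMap.ker_eq_bot, LinearMap.ker_eq_bot']
    intro y hy
    exact hlam.eq_zero_of_forall_mul_left hΛ hlamΛ fun a => by simpa using congr($hy a)
  obtain ⟨a, ha⟩ := (LinearMap.injective_iff_surjective_of_finrank_eq_finrank
    (Subspace.dual_finrank_eq (K := F) (V := A)).symm).mp hinj μ
  exact ⟨a, fun x => by rw [← ha]; simp⟩

/-- Left integrals are unique up to scalars. -/
lemma IsLeftIntegral.eq_smul {μ : A →ₗ[F] F} (hμ : IsLeftIntegral μ) : μ = μ Λ • lam := by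
  obtain ⟨a, ha⟩ := hlam.exists_eq_mul_left hΛ hlamΛ μ
  have hμa : μ = lam ∘ₗ LinearMap.mulLeft F a := LinearMap.ext ha
  have key : ∀ φ : A →ₗ[F] F, φ (antipode F a) = φ (counit (R := F) a • 1) := by
    intro φ
    have h1 : ∑ i ∈ (ℛ F a).index, φ (antipode F ((ℛ F a).left i)) • (ℛ F a).right i -
        φ 1 • a = 0 := by
      refine hlam.eq_zero_of_forall_mul_left hΛ hlamΛ fun y => ?_
      have h2 := hlam.antipode_mul a y
      rw [← hμa, congr($hμ y), scalarConv_apply, conv_mul_scalarConv_apply _ _ (ℛ F a), ha] at h2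
      have h3 := congr(φ $h2)
      simp only [map_sum, map_smul, LinearMap.comp_apply, LinearMap.mulRight_apply,
        smul_eq_mul] at h3
      simp only [sub_mul, Finset.sum_mul, smul_mul_assoc, map_sub, map_sum, map_smul, smul_eq_mul,
        sub_eq_zero]
      simpa only [mul_comm] using h3
    have h4 := congr(counit (R := F) $h1)
    simp only [map_sub, map_sum, map_smul, smul_eq_mul, map_zero, sub_eq_zero] at h4
    have h5 := congr(φ (antipode F $(sum_counit_right_smul (ℛ F a))))
    simp only [map_sum, map_smul, smul_eq_mul] at h5
    rw [← h5, map_smul, smul_eq_mul, mul_comm _ (φ 1), ← h4]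
    simp only [mul_comm]
  have h6 : antipode F a = antipode F (counit (R := F) a • (1 : A)) := by
    rw [map_smul, antipode_one, ← sub_eq_zero, ← Module.forall_dual_apply_eq_zero_iff F]
    intro φ
    rw [map_sub, key, sub_self]
  have h7 := hlam.antipode_injective hΛ hlamΛ h6
  have h8 : μ = counit (R := F) a • lam := by
    ext x
    rw [ha, h7]
    simp
  rw [h8]
  simp [hlamΛ]

/-- The distinguished group-like element attached to a left integral. -/
lemma IsLeftIntegral.exists_distinguished :
    ∃ g : A, IsGroupLikeElem F g ∧ ∀ h, (scalarConv lam * toConv (LinearMap.id : A →ₗ[F] A)) h =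
      lam h • g := by
  let g : A := (scalarConv lam * toConv (LinearMap.id : A →ₗ[F] A)) Λ
  have key : ∀ φ : A →ₗ[F] F, (toConv lam * toConv φ : WithConv (A →ₗ[F] F)) =
      φ g • toConv lam := by
    intro φ
    have hleft : IsLeftIntegral (toConv lam * toConv φ : WithConv (A →ₗ[F] F)).ofConv := by
      rw [IsLeftIntegral, scalarConv_mul, ← mul_assoc]
      exact congr($hlam * _)
    apply ofConv_injective
    rw [hlam.eq_smul hΛ hlamΛ hleft]
    simp only [g, scalarConv_mul_conv_apply _ _ (ℛ F Λ), (ℛ F Λ).convMul_apply]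
    simp
  refine ⟨g, ⟨?_, ?_⟩, fun h => ?_⟩
  · have h := congr($(key counit) Λ)
    have h1 : (toConv lam * toConv (counit : A →ₗ[F] F) : WithConv (A →ₗ[F] F)) = toConv lam :=
      mul_one _
    rw [h1] at h
    simpa [hlamΛ] using h.symm
  · refine eq_of_forall_map_dual fun φ ψ => ?_
    have h := congr($(mul_assoc (toConv lam) (toConv φ) (toConv ψ)) Λ)
    rw [key φ, smul_mul_assoc, key ψ] at h
    have h1 := congr($(key (toConv φ * toConv ψ : WithConv (A →ₗ[F] F)).ofConv) Λ)
    rw [toConv_ofConv, ← h] at h1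
    simpa [hlamΛ, LinearMap.convMul_apply] using h1.symm
  · rw [← sub_eq_zero, ← Module.forall_dual_apply_eq_zero_iff F]
    intro φ
    have h1 := congr($(key φ) h)
    rw [(ℛ F h).convMul_apply] at h1
    rw [map_sub, scalarConv_mul_conv_apply _ _ (ℛ F h)]
    simp only [LinearMap.id_apply, map_sum, map_smul, smul_eq_mul, sub_eq_zero]
    simpa [mul_comm] using h1

end FiniteDimensional

end RightIntegral

end HopfIntegrals

section FiniteOrder

open Coalgebra HopfAlgebra WithConv

variable {F A : Type*} [Field F] [Ring A] [HopfAlgebra F A] [FiniteDimensional F A]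

lemma IsGroupLikeElem.exists_pow_eq_one {g : A} (hg : IsGroupLikeElem F g) :
    ∃ n, 0 < n ∧ g ^ n = 1 := by
  have hfin : Finite (GroupLike F A) := (linearIndep_groupLikeVal (R := F) (A := A)).finite
  obtain ⟨n, hn, h⟩ := isOfFinOrder_iff_pow_eq_one.mp
    (isOfFinOrder_of_finite (⟨g, hg⟩ : GroupLike F A))
  refine ⟨n, hn, ?_⟩
  simpa using congr(GroupLike.val $h)

variable {lam : A →ₗ[F] F} (hlam : IsLeftIntegral lam) {Λ : A}
  (hΛ : ∀ x, Λ * x = counit (R := F) x • Λ) (hlamΛ : lam Λ = 1)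

include hlam hΛ hlamΛ

lemma IsLeftIntegral.scalarConv_comp_antipode_mul :
    scalarConv (lam ∘ₗ antipode F) * toConv (LinearMap.id : A →ₗ[F] A) =
      scalarConv (lam ∘ₗ antipode F) := by
  ext x
  apply hlam.antipode_injective hΛ hlamΛ
  have h := congr($hlam (antipode F x))
  rw [conv_mul_scalarConv_apply _ _ (reprAntipode (ℛ F x)), scalarConv_apply] at h
  rw [scalarConv_mul_conv_apply _ _ (ℛ F x), scalarConv_apply]
  simpa [reprAntipode] using h

/-- The element relating a left integral and its composite with the antipode is a nonzero multiple
of the distinguished group-like element. -/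
lemma IsLeftIntegral.exists_antipode_eq_mul :
    ∃ (g : A) (c : F), IsGroupLikeElem F g ∧ c ≠ 0 ∧
      ∀ x, lam (antipode F x) = c * lam (x * g) := by
  obtain ⟨g, hg, hgl⟩ := hlam.exists_distinguished hΛ hlamΛ
  obtain ⟨a, ha⟩ := hlam.exists_eq_mul_right hΛ hlamΛ (lam ∘ₗ antipode F)
  have hP : ∀ x : A, lam (x * a) • (1 : A) =
      (toConv ((lam ∘ₗ LinearMap.mulLeft F x).smulRight g) *
        toConv (antipode F : A →ₗ[F] A)) a := by
    intro x
    let P : WithConv (A →ₗ[F] A) := toConv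
      { toFun := fun y => (scalarConv (lam ∘ₗ LinearMap.mulRight F y) *
          toConv (LinearMap.id : A →ₗ[F] A)) x
        map_add' := fun a b => by
          simp [scalarConv_mul_conv_apply _ _ (ℛ F x), mul_add, add_smul, Finset.sum_add_distrib]
        map_smul' := fun c a => by
          simp [scalarConv_mul_conv_apply _ _ (ℛ F x), Finset.smul_sum, mul_smul] }
    have h1 : P * toConv (LinearMap.id : A →ₗ[F] A) =
        toConv ((lam ∘ₗ LinearMap.mulLeft F x).smulRight g) := by
      ext y
      have h2 := hgl (x * y)
      rw [scalarConv_mul_conv_apply _ _ ((ℛ F x).mul (ℛ F y))] at h2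
      rw [(ℛ F y).convMul_apply]
      simpa [P, scalarConv_mul_conv_apply _ _ (ℛ F x), Finset.sum_product_right,
        Finset.sum_mul] using h2
    rw [← h1, mul_assoc, LinearMap.id_mul_antipode, mul_one]
    have h3 := congr($(hlam.scalarConv_comp_antipode_mul hΛ hlamΛ) x)
    have h4 : lam ∘ₗ LinearMap.mulRight F a = lam ∘ₗ antipode F :=
      LinearMap.ext fun x => (ha x).symm
    rw [scalarConv_apply, ha, ← h4] at h3
    exact h3.symm
  have hga : g * antipode F a = counit (R := F) a • 1 := by
    rw [← sub_eq_zero, ← Module.forall_dual_apply_eq_zero_iff F]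
    intro φ
    have h1 : φ 1 • a - ∑ i ∈ (ℛ F a).index,
        φ (g * antipode F ((ℛ F a).right i)) • (ℛ F a).left i = 0 := by
      refine hlam.eq_zero_of_forall_mul_right hΛ hlamΛ fun x => ?_
      have h2 := congr(φ $(hP x))
      rw [(ℛ F a).convMul_apply] at h2
      simp only [mul_sub, map_sub, Finset.mul_sum, mul_smul_comm, map_sum, map_smul, smul_eq_mul,
        sub_eq_zero]
      simpa [mul_comm] using h2
    have h3 := congr(counit (R := F) $h1)
    simp only [map_sub, map_sum, map_smul, smul_eq_mul, map_zero, sub_eq_zero] at h3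
    have h4 := congr(φ (g * antipode F $(sum_counit_smul (ℛ F a))))
    simp only [map_sum, map_smul, Finset.mul_sum, mul_smul_comm, smul_eq_mul] at h4
    rw [map_sub, map_smul, smul_eq_mul, mul_comm _ (φ 1), h3, ← h4, sub_eq_zero]
    simp only [mul_comm]
  have hag : a = counit (R := F) a • g := by
    apply hlam.antipode_injective hΛ hlamΛ
    rw [map_smul, ← one_mul (antipode F a), ← hg.antipode_mul_cancel, mul_assoc, hga]
    simp
  refine ⟨g, counit (R := F) a, hg, ?_, fun x => ?_⟩
  · intro h0
    obtain ⟨y, hy⟩ := hlam.antipode_surjective hΛ hlamΛ Λ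
    have h := ha y
    rw [hag, h0] at h
    simp [hy, hlamΛ] at h
  · have h := ha x
    rw [hag] at h
    simpa using h

/-- The formula of Radford for the fourth power of the antipode yields that the antipode has finite
order. -/
lemma IsLeftIntegral.exists_antipode_pow_eq_one
    (hnak : ∀ a b, lam (a * b) = lam (b * antipode F (antipode F a))) :
    ∃ n, 0 < n ∧ ∀ x : A, (fun x => antipode F (antipode F x))^[n] x = x := by
  obtain ⟨g, c, hg, hc, hgl⟩ := hlam.exists_antipode_eq_mul hΛ hlamΛ
  obtain ⟨n, hn, hgn⟩ := IsGroupLikeElem.exists_pow_eq_one hg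
  have key : ∀ b : A, b * g = g * antipode F (antipode F (antipode F (antipode F b))) := by
    intro b
    rw [← sub_eq_zero]
    refine hlam.eq_zero_of_forall_mul_right hΛ hlamΛ fun x => ?_
    rw [mul_sub, map_sub, sub_eq_zero]
    apply mul_left_cancel₀ hc
    rw [← mul_assoc, ← hgl, antipode_mul_antidistrib, hnak, ← antipode_mul_antidistrib, hgl,
      mul_assoc, hnak,
      ← mul_assoc x]
  have hpow : ∀ (m : ℕ) (b : A),
      b * g ^ m = g ^ m * (fun x => antipode F (antipode F x))^[2 * m] b := by
    intro m
    induction m with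
    | zero => simp
    | succ m ih =>
      intro b
      rw [pow_succ', ← mul_assoc, key, mul_assoc, ih, mul_assoc, mul_add, mul_one,
        Function.iterate_add_apply]
      rfl
  refine ⟨2 * n, by positivity, fun x => ?_⟩
  simpa [hgn] using (hpow n x).symm

end FiniteOrder

section TraceIntegral

open Coalgebra HopfAlgebra WithConv

variable {F A : Type*} [Field F] [Ring A] [HopfAlgebra F A]

lemma map_antipode_mul (z w : A ⊗[F] A) :
    TensorProduct.map (antipode F) (antipode F) (z * w) =
      TensorProduct.map (antipode F) (antipode F) w *
        TensorProduct.map (antipode F) (antipode F) z := by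
  induction z with
  | zero => simp
  | add x y hx hy => simp [add_mul, mul_add, hx, hy]
  | tmul a b =>
    induction w with
    | zero => simp
    | add x y hx hy => simp [add_mul, mul_add, hx, hy]
    | tmul c d => simp [antipode_mul_antidistrib]

lemma comul_antipode_antipode (x : A) :
    comul (R := F) (antipode F (antipode F x)) = TensorProduct.map (antipode F) (antipode F)
      ((convLeftAntipode F A * convRightAntipode F A) x) := by
  rw [comul_antipode (reprAntipode (ℛ F x)), (ℛ F x).convMul_apply]
  simp [convLeftAntipode, convRightAntipode, reprAntipode]

lemma sum_comul_antipode_antipode_mul {x : A} {ι : Type*} (r : Coalgebra.Repr F x ι) :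
    ∑ i ∈ r.index, comul (R := F) (antipode F (antipode F (r.right i))) *
      (antipode F (r.left i) ⊗ₜ[F] (1 : A)) = (1 : A) ⊗ₜ[F] antipode F (antipode F x) := by
  have h : convLeft F A * (convLeftAntipode F A * convRightAntipode F A) =
      convRightAntipode F A := by
    rw [← mul_assoc, convLeft_mul_convLeftAntipode, one_mul]
  have h1 := congr(TensorProduct.map (antipode F) (antipode F) ($h x))
  rw [r.convMul_apply] at h1
  simp only [map_sum, map_antipode_mul, ← comul_antipode_antipode] at h1
  simpa [convLeft, convRightAntipode] using h1

/-- The operator `x ↦ f(x₁) x₂`. -/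
def leftHit (f : A →ₗ[F] F) : A →ₗ[F] A :=
  (scalarConv f * toConv (LinearMap.id : A →ₗ[F] A)).ofConv

lemma leftHit_apply (f : A →ₗ[F] F) {x : A} {ι : Type*} (r : Coalgebra.Repr F x ι) :
    leftHit f x = ∑ i ∈ r.index, f (r.left i) • r.right i :=
  scalarConv_mul_conv_apply _ f r

lemma leftHit_comp_leftHit (f g : A →ₗ[F] F) :
    toConv (leftHit f ∘ₗ leftHit g) =
      scalarConv g * scalarConv f * toConv (LinearMap.id : A →ₗ[F] A) := by
  ext x
  rw [mul_assoc]
  change leftHit f (leftHit g x) = (scalarConv g * toConv (leftHit f)) x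
  rw [scalarConv_mul_conv_apply _ _ (ℛ F x), leftHit_apply g (ℛ F x)]
  simp

variable (F A) in
/-- The functional `h ↦ Tr(x ↦ h S²(x))`. -/
def traceIntegral : A →ₗ[F] F :=
  LinearMap.trace F A ∘ₗ LinearMap.lcomp F A (antipode F ∘ₗ antipode F) ∘ₗ LinearMap.mul F A

lemma traceIntegral_apply (h : A) :
    traceIntegral F A h =
      LinearMap.trace F A (LinearMap.mulLeft F h ∘ₗ antipode F ∘ₗ antipode F) := rfl

lemma traceIntegral_mul (a b : A) :
    traceIntegral F A (a * b) = traceIntegral F A (b * antipode F (antipode F a)) := by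
  have h1 : LinearMap.mulLeft F (a * b) ∘ₗ antipode F ∘ₗ antipode F =
      LinearMap.mulLeft F a * (LinearMap.mulLeft F b ∘ₗ antipode F ∘ₗ antipode F) := by
    ext x; simp
  have h2 : LinearMap.mulLeft F (b * antipode F (antipode F a)) ∘ₗ antipode F ∘ₗ antipode F =
      (LinearMap.mulLeft F b ∘ₗ antipode F ∘ₗ antipode F) * LinearMap.mulLeft F a := by
    ext x; simp [antipode_mul_antidistrib]
  rw [traceIntegral_apply, traceIntegral_apply, h1, h2, LinearMap.trace_mul_comm]

variable [FiniteDimensional F A]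

lemma traceIntegral_eq_one {Λ : A} (hΛ : ∀ x, Λ * x = counit (R := F) x • Λ)
    (hΛ1 : counit (R := F) Λ = 1) : traceIntegral F A Λ = 1 := by
  have h : LinearMap.mulLeft F Λ ∘ₗ antipode F ∘ₗ antipode F =
      (counit (R := F) (A := A)).smulRight Λ := by
    ext x
    simp [hΛ]
  rw [traceIntegral_apply, h, LinearMap.trace_smulRight, hΛ1]

lemma traceIntegral_leftHit (φ : A →ₗ[F] F) (h : A) :
    traceIntegral F A (leftHit φ h) = φ 1 * traceIntegral F A h := by
  let b := Module.finBasis F A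
  let ψ : Fin (Module.finrank F A) → A →ₗ[F] F :=
    fun j => φ ∘ₗ LinearMap.mulLeft F (b j) ∘ₗ antipode F
  let B : A →ₗ[F] A := LinearMap.mulLeft F h ∘ₗ antipode F ∘ₗ antipode F
  have hb : ∀ y z : A, ∑ j, b.coord j y * φ (b j * z) = φ (y * z) := by
    intro y z
    conv_rhs => rw [← b.sum_repr y, Finset.sum_mul, map_sum]
    simp
  have h1 : ∑ j, leftHit (b.coord j) ∘ₗ B ∘ₗ leftHit (ψ j) =
      LinearMap.mulLeft F (leftHit φ h) ∘ₗ antipode F ∘ₗ antipode F := by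
    let E : A ⊗[F] A →ₗ[F] A :=
      TensorProduct.lift (LinearMap.toSpanSingleton F _ LinearMap.id ∘ₗ φ)
    have hE : ∀ y z : A, ∑ j, φ (b j * z) • leftHit (b.coord j) y =
        E (comul (R := F) y * (z ⊗ₜ[F] 1)) := by
      intro y z
      simp only [leftHit_apply _ (ℛ F y), Finset.smul_sum, smul_smul]
      rw [Finset.sum_comm]
      simp only [← Finset.sum_smul, mul_comm (φ _), hb]
      conv_rhs => rw [← (ℛ F y).eq]
      simp [E, Finset.sum_mul]
    ext x
    have h4 : E (comul (R := F) h * (1 ⊗ₜ[F] antipode F (antipode F x))) =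
        leftHit φ h * antipode F (antipode F x) := by
      rw [leftHit_apply φ (ℛ F h), ← (ℛ F h).eq]
      simp [E, Finset.sum_mul]
    simp only [LinearMap.comp_apply, LinearMap.mulLeft_apply]
    rw [← h4, ← sum_comul_antipode_antipode_mul (ℛ F x), Finset.mul_sum, map_sum]
    simp only [← mul_assoc, ← Bialgebra.comul_mul, ← hE]
    rw [Finset.sum_comm]
    simp [B, ψ, leftHit_apply _ (ℛ F x)]
  have h2 : ∑ j, leftHit (ψ j) ∘ₗ leftHit (b.coord j) = φ 1 • LinearMap.id := by
    have h4 : ∑ j, scalarConv (b.coord j) * scalarConv (ψ j) =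
        φ 1 • (1 : WithConv (A →ₗ[F] A)) := by
      ext x
      have h5 : ∀ j, (scalarConv (b.coord j) * scalarConv (ψ j)) x =
          (∑ i ∈ (ℛ F x).index, b.coord j ((ℛ F x).left i) *
            φ (b j * antipode F ((ℛ F x).right i))) • (1 : A) := by
        intro j
        rw [(ℛ F x).convMul_apply, Finset.sum_smul]
        simp [scalarConv_apply, ψ, smul_smul, mul_comm]
      change (∑ j, scalarConv (b.coord j) * scalarConv (ψ j)).ofConv x = _
      rw [ofConv_sum, LinearMap.sum_apply]
      change ∑ j, (scalarConv (b.coord j) * scalarConv (ψ j)) x = _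
      simp only [h5]
      rw [← Finset.sum_smul, Finset.sum_comm]
      simp only [hb]
      rw [← map_sum, sum_mul_antipode_eq_smul, map_smul]
      simp [Algebra.algebraMap_eq_smul_one, smul_smul, mul_comm]
    apply toConv_injective
    rw [WithConv.toConv_sum]
    simp only [leftHit_comp_leftHit]
    rw [← Finset.sum_mul, h4, smul_mul_assoc, one_mul]
    rfl
  rw [traceIntegral_apply, ← h1, map_sum]
  have h3 : ∀ j, LinearMap.trace F A (leftHit (b.coord j) ∘ₗ B ∘ₗ leftHit (ψ j)) =
      LinearMap.trace F A (B ∘ₗ (leftHit (ψ j) ∘ₗ leftHit (b.coord j))) := fun j =>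
    LinearMap.trace_mul_comm F (leftHit (b.coord j)) (B ∘ₗ leftHit (ψ j))
  simp only [h3]
  rw [← map_sum]
  have h6 : ∑ j, B ∘ₗ leftHit (ψ j) ∘ₗ leftHit (b.coord j) = φ 1 • B := by
    change ∑ j, B * (leftHit (ψ j) ∘ₗ leftHit (b.coord j)) = φ 1 • B
    rw [← Finset.mul_sum, h2, mul_smul_comm]
    rfl
  rw [h6]
  simp [B, traceIntegral_apply]

lemma isLeftIntegral_traceIntegral : IsLeftIntegral (traceIntegral F A) := by
  unfold IsLeftIntegral
  ext h
  rw [← sub_eq_zero, ← Module.forall_dual_apply_eq_zero_iff F]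
  intro φ
  have h1 := traceIntegral_leftHit φ h
  rw [leftHit_apply φ (ℛ F h)] at h1
  rw [map_sub, sub_eq_zero, scalarConv_apply, conv_mul_scalarConv_apply _ _ (ℛ F h)]
  simpa [mul_comm] using h1

end TraceIntegral

section RootsOfUnity

variable {F : Type*} [Field F] [CharZero F]

variable (F) in
/-- There is an embedding of the field of algebraic numbers in `F` into `ℂ`. -/
lemma exists_embedding :
    ∃ (E : Subfield F) (_ : E →+* ℂ), ∀ (x : F) (n : ℕ), n ≠ 0 → x ^ n = 1 → x ∈ E := by
  let E := algebraicClosure ℚ F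
  have : Algebra.IsAlgebraic ℚ E := algebraicClosure.isAlgebraic ℚ F
  let j : E →ₐ[ℚ] ℂ := IsAlgClosed.lift
  refine ⟨E.toSubfield, j.toRingHom, fun x n hn hx => ?_⟩
  change x ∈ algebraicClosure ℚ F
  rw [mem_algebraicClosure_iff]
  exact (IsIntegral.of_pow (Nat.pos_of_ne_zero hn) (hx ▸ isIntegral_one)).isAlgebraic

variable [IsAlgClosed F]

lemma exists_trace_eq_sum_of_pow_eq_one {V : Type*} [AddCommGroup V] [Module F V]
    [FiniteDimensional F V] {f g : Module.End F V} {n : ℕ} (hn : n ≠ 0) (hf : f ^ n = 1)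
    (hgf : g * f = 1) :
    ∃ (s : Finset F) (m : F → ℕ), (∀ μ ∈ s, μ ^ n = 1) ∧
      LinearMap.trace F V f = ∑ μ ∈ s, (m μ : F) * μ ∧
      LinearMap.trace F V g = ∑ μ ∈ s, (m μ : F) * μ⁻¹ := by
  classical
  have hss : f.IsSemisimple := by
    refine Module.End.isSemisimple_of_squarefree_aeval_eq_zero (p := Polynomial.X ^ n - 1)
      (Polynomial.X_pow_sub_one_separable_iff.mpr (by exact_mod_cast hn)).squarefree ?_
    simp [hf]
  have htop : ⨆ μ, f.eigenspace μ = ⊤ := hss.iSup_eigenspace_eq_top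
  have hinternal := DirectSum.isInternal_submodule_of_iSupIndep_of_iSup_eq_top
    f.eigenspaces_iSupIndep htop
  have hfin : {μ | f.eigenspace μ ≠ ⊥}.Finite :=
    WellFoundedGT.finite_ne_bot_of_iSupIndep f.eigenspaces_iSupIndep
  have hpow : ∀ μ ∈ hfin.toFinset, μ ^ n = 1 := by
    intro μ hμ
    obtain ⟨x, hx, hx0⟩ := (Submodule.ne_bot_iff _).mp (hfin.mem_toFinset.mp hμ)
    have h1 : (f ^ n) x = μ ^ n • x := by
      have hev : f.HasEigenvector μ x := ⟨hx, hx0⟩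
      exact hev.pow_apply n
    rw [hf, Module.End.one_apply] at h1
    have h2 : (μ ^ n - 1) • x = 0 := by rw [sub_smul, one_smul, ← h1, sub_self]
    exact sub_eq_zero.mp ((smul_eq_zero.mp h2).resolve_right hx0)
  have hfx : ∀ μ, ∀ x ∈ f.eigenspace μ, f x = μ • x := fun μ x hx =>
    Module.End.mem_eigenspace_iff.mp hx
  have hgx : ∀ μ, ∀ x ∈ f.eigenspace μ, g x = μ⁻¹ • x := by
    intro μ x hx
    have h1 : g (f x) = x := congr($hgf x)
    rw [hfx μ x hx, map_smul] at h1
    rcases eq_or_ne μ 0 with rfl | h0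
    · rw [← h1]; simp
    · rw [← h1, smul_smul, inv_mul_cancel₀ h0, one_smul, h1]
  have htr : ∀ (h : Module.End F V) (c : F → F), (∀ μ, ∀ x ∈ f.eigenspace μ, h x = c μ • x) →
      LinearMap.trace F V h =
        ∑ μ ∈ hfin.toFinset, (Module.finrank F (f.eigenspace μ) : F) * c μ := by
    intro h c hc
    rw [LinearMap.trace_eq_sum_trace_restrict' hinternal hfin (f := h) fun μ x hx => by
      rw [hc μ x hx]; exact Submodule.smul_mem _ _ hx]
    refine Finset.sum_congr rfl fun μ _ => ?_
    have h1 : h.restrict (fun x hx => by rw [hc μ x hx]; exact Submodule.smul_mem _ _ hx) =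
        c μ • (LinearMap.id : f.eigenspace μ →ₗ[F] f.eigenspace μ) := by
      ext x
      simp [hc μ x x.2]
    rw [h1, map_smul, LinearMap.trace_id, smul_eq_mul, mul_comm]
  exact ⟨hfin.toFinset, fun μ => Module.finrank F (f.eigenspace μ), hpow, htr f id hfx,
    htr g (·⁻¹) hgx⟩

/-- A sum of products `tr(u) tr(u⁻¹)` with `u` of finite order vanishes only if all `tr(u)` do. -/
lemma trace_eq_zero_of_sum_eq_zero {ι : Type*} [Fintype ι] {V : ι → Type*}
    [∀ i, AddCommGroup (V i)] [∀ i, Module F (V i)] [∀ i, FiniteDimensional F (V i)]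
    (f g : ∀ i, Module.End F (V i)) {n : ℕ} (hn : n ≠ 0) (hf : ∀ i, f i ^ n = 1)
    (hgf : ∀ i, g i * f i = 1)
    (hsum : ∑ i, LinearMap.trace F (V i) (f i) * LinearMap.trace F (V i) (g i) = 0) (i : ι) :
    LinearMap.trace F (V i) (f i) = 0 := by
  obtain ⟨E, j, hE⟩ := exists_embedding F
  have key : ∀ i, ∃ a b : E, (a : F) = LinearMap.trace F (V i) (f i) ∧
      (b : F) = LinearMap.trace F (V i) (g i) ∧ j b = (starRingEnd ℂ) (j a) := by
    intro i
    obtain ⟨s, m, hs, h1, h2⟩ := exists_trace_eq_sum_of_pow_eq_one hn (hf i) (hgf i)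
    refine ⟨∑ μ ∈ s.attach, (m μ : E) * ⟨μ, hE μ n hn (hs μ μ.2)⟩,
      ∑ μ ∈ s.attach, (m μ : E) * (⟨μ, hE μ n hn (hs μ μ.2)⟩ : E)⁻¹, ?_, ?_, ?_⟩
    · rw [h1, ← Finset.sum_attach s]
      simp
    · rw [h2, ← Finset.sum_attach s]
      simp
    · simp only [map_sum, map_mul, map_natCast, map_inv₀]
      refine Finset.sum_congr rfl fun μ _ => ?_
      rw [Complex.inv_eq_conj]
      refine Complex.norm_eq_one_of_pow_eq_one (n := n) ?_ hn
      rw [← map_pow, ← map_one j]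
      congr 1
      exact Subtype.ext (hs μ μ.2)
  choose a b ha hb hab using key
  have h1 : ∑ i, a i * b i = 0 := by
    apply Subtype.ext
    simpa [ha, hb] using hsum
  have h2 := congr(j $h1)
  simp only [map_sum, map_mul, hab, Complex.mul_conj, map_zero] at h2
  norm_cast at h2
  have h3 := (Finset.sum_eq_zero_iff_of_nonneg fun i _ => Complex.normSq_nonneg _).mp h2 i
    (Finset.mem_univ i)
  rw [← ha, j.injective ((Complex.normSq_eq_zero.mp h3).trans (map_zero j).symm)]
  rfl

end RootsOfUnity

section NakayamaTrace

variable {F : Type*} [Field F]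

section Blocks

lemma exists_eq_smul_one_of_forall_comm {ι : Type*} [DecidableEq ι] {n : ι → Type*}
    [∀ i, Fintype (n i)] [∀ i, DecidableEq (n i)] {z : ∀ i, Matrix (n i) (n i) F}
    (h : ∀ x, z * x = x * z) (i : ι) : ∃ c : F, z i = c • 1 := by
  obtain ⟨c, hc⟩ := Matrix.mem_range_scalar_of_commute_single (M := z i) fun a b _ => by
    have h1 := congr($(h (Pi.single i (Matrix.single a b 1))) i)
    simpa [Commute, SemiconjBy] using h1.symm
  exact ⟨c, by rw [← hc, Matrix.smul_one_eq_diagonal]; rfl⟩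

lemma sum_trace_mul_comm {ι : Type*} [Fintype ι] {n : ι → Type*} [∀ i, Fintype (n i)]
    (x y : ∀ i, Matrix (n i) (n i) F) :
    ∑ i, (x i * y i).trace = ∑ i, (y i * x i).trace :=
  Finset.sum_congr rfl fun _ _ => Matrix.trace_mul_comm _ _

variable {ι : Type*} [Fintype ι] [DecidableEq ι] {n : ι → Type*} [∀ i, Fintype (n i)]
  [∀ i, DecidableEq (n i)]

lemma exists_eq_sum_trace_mul (f : (∀ i, Matrix (n i) (n i) F) →ₗ[F] F) :
    ∃ w : ∀ i, Matrix (n i) (n i) F, ∀ x, f x = ∑ i, (w i * x i).trace := by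
  obtain ⟨w, hw⟩ : ∃ w : ∀ i, Matrix (n i) (n i) F,
      ∀ i a b, w i a b = f (Pi.single i (Matrix.single b a 1)) :=
    ⟨fun i => Matrix.of fun a b => f (Pi.single i (Matrix.single b a 1)), fun _ _ _ => rfl⟩
  refine ⟨w, fun x => ?_⟩
  let g : (∀ i, Matrix (n i) (n i) F) →ₗ[F] F := ∑ i, Matrix.traceLinearMap (n i) F F ∘ₗ
    LinearMap.mulLeft F (w i) ∘ₗ LinearMap.proj i
  have hg : ∀ x, g x = ∑ i, (w i * x i).trace := fun x => by simp [g, LinearMap.sum_apply]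
  have h : f = g := by
    refine LinearMap.pi_ext' fun i => ?_
    apply Matrix.ext_linearMap
    intro a b
    ext
    simp only [LinearMap.comp_apply, hg]
    rw [Finset.sum_eq_single i (fun j _ hj => by simp [hj]) (by simp)]
    simp [Matrix.trace_mul_single, hw]
  rw [h, hg]

lemma trace_mulLeft_mulRight (w v : ∀ i, Matrix (n i) (n i) F) :
    LinearMap.trace F _ (LinearMap.mulLeft F w ∘ₗ LinearMap.mulRight F v) =
      ∑ i, (w i).trace * (v i).trace := by
  rw [LinearMap.trace_eq_matrix_trace F (Pi.basis fun i => Matrix.stdBasis F (n i) (n i))]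
  simp only [Matrix.trace, Matrix.diag_apply, LinearMap.toMatrix_apply, Fintype.sum_sigma,
    Fintype.sum_prod_type, Finset.sum_mul_sum]
  refine Finset.sum_congr rfl fun i _ => Finset.sum_congr rfl fun a _ =>
    Finset.sum_congr rfl fun b _ => ?_
  have h : ∀ M : Matrix (n i) (n i) F, (Matrix.stdBasis F (n i) (n i)).repr M (a, b) = M a b := by
    intro M
    rfl
  rw [Pi.basis_repr, h, Pi.basis_apply, Matrix.stdBasis_eq_single]
  simp only [LinearMap.comp_apply, LinearMap.mulLeft_apply, LinearMap.mulRight_apply, Pi.mul_apply,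
    Pi.single_eq_same]
  rw [Matrix.mul_apply, Finset.sum_eq_single a
    (fun c _ hc => by rw [Matrix.single_mul_apply_of_ne _ _ _ _ _ hc, mul_zero]) (by simp),
    Matrix.single_mul_apply_same, one_mul]

lemma eq_of_forall_sum_trace_mul {a b : ∀ i, Matrix (n i) (n i) F}
    (h : ∀ x : ∀ i, Matrix (n i) (n i) F, ∑ i, (a i * x i).trace = ∑ i, (b i * x i).trace) :
    a = b := by
  funext i
  rw [Matrix.ext_iff_trace_mul_right]
  intro x
  have h1 := h (Pi.single i x)
  rwa [Finset.sum_eq_single i (fun j _ hj => by simp [hj]) (by simp),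
    Finset.sum_eq_single i (fun j _ hj => by simp [hj]) (by simp), Pi.single_eq_same] at h1

lemma trace_ne_zero_of_nakayama_blocks [IsAlgClosed F] [CharZero F] [∀ i, Nonempty (n i)]
    (σ : (∀ i, Matrix (n i) (n i) F) →ₗ[F] (∀ i, Matrix (n i) (n i) F))
    (lam : (∀ i, Matrix (n i) (n i) F) →ₗ[F] F) (hlam : ∀ y, (∀ a, lam (a * y) = 0) → y = 0)
    (hσ : ∀ a b, lam (a * b) = lam (b * σ a)) {N : ℕ} (hN : N ≠ 0) (hσN : ∀ x, σ^[N] x = x)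
    (ε : (∀ i, Matrix (n i) (n i) F) →ₐ[F] F) : LinearMap.trace F _ σ ≠ 0 := by
  obtain ⟨w, hw⟩ := exists_eq_sum_trace_mul lam
  have hwσ : ∀ a, w * a = σ a * w := by
    intro a
    refine eq_of_forall_sum_trace_mul fun b => ?_
    have h1 := hσ a b
    rw [hw, hw] at h1
    simp only [Pi.mul_apply, ← mul_assoc] at h1 ⊢
    rw [h1]
    refine Finset.sum_congr rfl fun i _ => ?_
    rw [Matrix.trace_mul_comm, mul_assoc]
  have hinj : Function.Injective (LinearMap.mulRight F w) := by
    rw [← LinearMap.ker_eq_bot, LinearMap.ker_eq_bot']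
    intro y hy
    refine hlam y fun a => ?_
    have h1 : y * w = 0 := hy
    rw [hw, sum_trace_mul_comm]
    have h2 : ∀ i, (a * y) i * w i = 0 := fun i => by
      have := congr($h1 i)
      simp only [Pi.mul_apply, Pi.zero_apply] at this ⊢
      rw [mul_assoc, this, mul_zero]
    exact Finset.sum_eq_zero fun i _ => by rw [h2, Matrix.trace_zero]
  obtain ⟨v, hv⟩ := LinearMap.injective_iff_surjective.mp hinj 1
  replace hv : v * w = 1 := hv
  have hv' : w * v = 1 := hinj (by simp [mul_assoc, hv])
  have hσw : ∀ a, σ a = w * (a * v) := by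
    intro a
    rw [← mul_assoc, hwσ, mul_assoc, hv', mul_one]
  have hσm : ∀ m a, σ^[m] a = w ^ m * (a * v ^ m) := by
    intro m
    induction m with
    | zero => simp
    | succ m ih =>
      intro a
      rw [Function.iterate_succ_apply', ih, hσw, pow_succ' w, pow_succ v]
      simp only [mul_assoc]
  have hvw : v ^ N * w ^ N = 1 := by
    have hc : Commute v w := hv.trans hv'.symm
    rw [← hc.mul_pow, hv, one_pow]
  have hcomm : ∀ x, w ^ N * x = x * w ^ N := by
    intro x
    have h1 := hσm N x
    rw [hσN] at h1
    conv_rhs => rw [h1]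
    rw [mul_assoc, mul_assoc, hvw, mul_one]
  choose c hc using exists_eq_smul_one_of_forall_comm hcomm
  have hc0 : ∀ i, c i ≠ 0 := by
    intro i h0
    have h1 := congr($hvw i)
    rw [Pi.mul_apply, hc, h0, zero_smul, mul_zero] at h1
    exact zero_ne_one h1
  choose r hr using fun i => IsAlgClosed.exists_pow_nat_eq (c i) (Nat.pos_of_ne_zero hN)
  have hr0 : ∀ i, r i ≠ 0 := by
    intro i h0
    apply hc0 i
    rw [← hr, h0, zero_pow hN]
  have hσtr : σ = LinearMap.mulLeft F w ∘ₗ LinearMap.mulRight F v := by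
    exact LinearMap.ext fun a => by simp [hσw]
  intro htr
  rw [hσtr, trace_mulLeft_mulRight] at htr
  have hwtr : ∀ i, (w i).trace = 0 := by
    intro i
    have h1 := trace_eq_zero_of_sum_eq_zero (F := F)
      (fun i => Matrix.toLin' ((r i)⁻¹ • w i)) (fun i => Matrix.toLin' (r i • v i)) hN
      (fun i => by
        rw [← Matrix.toLin'_pow, smul_pow, ← Pi.pow_apply w, hc, inv_pow, hr, smul_smul,
          inv_mul_cancel₀ (hc0 i), one_smul, Matrix.toLin'_one]
        rfl)
      (fun i => by
        have h2 : v i * w i = 1 := congr($hv i)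
        rw [Module.End.mul_eq_comp, ← Matrix.toLin'_mul, smul_mul_smul_comm, h2,
          mul_inv_cancel₀ (hr0 i), one_smul,
          Matrix.toLin'_one]
        rfl)
      (by
        rw [← htr]
        refine Finset.sum_congr rfl fun i _ => ?_
        rw [Matrix.trace_toLin'_eq, Matrix.trace_toLin'_eq, Matrix.trace_smul, Matrix.trace_smul]
        simp only [smul_eq_mul]
        field_simp [hr0 i])
      i
    rw [Matrix.trace_toLin'_eq, Matrix.trace_smul, smul_eq_zero] at h1
    exact h1.resolve_left (inv_ne_zero (hr0 i))
  obtain ⟨z, hz⟩ := exists_eq_sum_trace_mul ε.toLinearMap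
  have hzc : ∀ x, z * x = x * z := by
    intro x
    refine eq_of_forall_sum_trace_mul fun y => ?_
    have h1 : ε.toLinearMap (x * y) = ε.toLinearMap (y * x) := by simp [mul_comm]
    rw [hz, hz] at h1
    simp only [Pi.mul_apply, ← mul_assoc] at h1 ⊢
    rw [h1]
    refine Finset.sum_congr rfl fun i _ => ?_
    rw [Matrix.trace_mul_comm, mul_assoc]
  choose s hs using exists_eq_smul_one_of_forall_comm hzc
  have h0 : ε w = 0 := by
    change ε.toLinearMap w = 0
    rw [hz]
    simp [hs, hwtr]
  have h1 : ε (v * w) = 1 := by rw [hv, map_one]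
  rw [map_mul, h0, mul_zero] at h1
  exact zero_ne_one h1

end Blocks

/-- If `σ` is a finite-order Nakayama automorphism of a semisimple algebra having a one-dimensional
representation, then its trace is nonzero. -/
lemma trace_ne_zero_of_nakayama [IsAlgClosed F] [CharZero F] {A : Type*} [Ring A] [Algebra F A]
    [FiniteDimensional F A] [IsSemisimpleRing A] (σ : A →ₗ[F] A)
    (lam : A →ₗ[F] F) (hlam : ∀ y, (∀ a, lam (a * y) = 0) → y = 0)
    (hσ : ∀ a b, lam (a * b) = lam (b * σ a)) {N : ℕ} (hN : N ≠ 0) (hσN : ∀ x, σ^[N] x = x)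
    (ε : A →ₐ[F] F) : LinearMap.trace F A σ ≠ 0 := by
  obtain ⟨m, d, hd, ⟨e⟩⟩ := IsSemisimpleRing.exists_algEquiv_pi_matrix_of_isAlgClosed F A
  have hconj : ∀ x, e.toLinearEquiv.conj σ x = e (σ (e.symm x)) := fun _ => rfl
  have hit : ∀ k x, (e.toLinearEquiv.conj σ)^[k] x = e (σ^[k] (e.symm x)) := by
    intro k
    induction k with
    | zero => simp
    | succ k ih =>
      intro x
      rw [Function.iterate_succ_apply', ih, hconj, AlgEquiv.symm_apply_apply,
        Function.iterate_succ_apply']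
  have h := trace_ne_zero_of_nakayama_blocks (e.toLinearEquiv.conj σ)
    (lam ∘ₗ e.symm.toLinearMap)
    (fun y hy => by
      have h1 := hlam (e.symm y) fun a => by simpa using hy (e a)
      simpa using h1)
    (fun a b => by
      change lam (e.symm (a * b)) = lam (e.symm (b * e (σ (e.symm a))))
      rw [map_mul e.symm, hσ, map_mul e.symm, AlgEquiv.symm_apply_apply])
    hN (fun x => by rw [hit, hσN, AlgEquiv.apply_symm_apply])
    (ε.comp e.symm.toAlgHom)
  rwa [LinearMap.trace_conj'] at h

end NakayamaTrace

section Semisimple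

open Coalgebra HopfAlgebra WithConv

variable {F : Type*} [Field F]

/-- An algebra with a separability idempotent is semisimple. -/
lemma isSemisimpleRing_of_casimir {B : Type*} [Ring B] [Algebra F B] {κ : Type*} [Fintype κ]
    (a b : κ → B) (hab : ∑ i, a i * b i = 1)
    (hcas : ∀ f, ∑ i, (f * a i) ⊗ₜ[F] b i = ∑ i, a i ⊗ₜ[F] (b i * f)) : IsSemisimpleRing B := by
  refine (isSemisimpleModule_iff B B).mpr ⟨fun I => ?_⟩
  obtain ⟨p, hp⟩ := LinearMap.exists_leftInverse_of_injective
    ((I.restrictScalars F).subtype) (Submodule.ker_subtype _)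
  have hp' : ∀ x (hx : x ∈ I), (p x : B) = x := fun x hx => congr(($hp ⟨x, hx⟩ : B))
  have hlin : ∀ f x, ∑ i, f * a i * (p (b i * x) : B) = ∑ i, a i * (p (b i * (f * x)) : B) := by
    intro f x
    let Φ : B ⊗[F] B →ₗ[F] B := TensorProduct.lift ((LinearMap.mul F B).compl₂
      ((I.restrictScalars F).subtype ∘ₗ p ∘ₗ LinearMap.mulRight F x))
    have h := congr(Φ $(hcas f))
    simpa only [map_sum, Φ, TensorProduct.lift.tmul, LinearMap.compl₂_apply, LinearMap.mul_apply',
      LinearMap.comp_apply, LinearMap.mulRight_apply, Submodule.subtype_apply, mul_assoc] using h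
  let P : B →ₗ[B] I :=
    { toFun := fun x => ∑ i, a i • (⟨p (b i * x), (p (b i * x)).2⟩ : I)
      map_add' := fun x y => by
        rw [← Finset.sum_add_distrib]
        refine Finset.sum_congr rfl fun i _ => ?_
        rw [← smul_add]
        congr 1
        apply Subtype.ext
        simp [mul_add]
      map_smul' := fun f x => by
        apply Subtype.ext
        have h := hlin f x
        simp only [mul_assoc, ← Finset.mul_sum] at h
        simpa using h.symm }
  refine ⟨LinearMap.ker P, LinearMap.isCompl_of_proj fun x => ?_⟩
  apply Subtype.ext
  have h : ∀ i, (p (b i * (x : B)) : B) = b i * x := fun i => hp' _ (I.smul_mem (b i) x.2)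
  simp only [P, LinearMap.coe_mk, AddHom.coe_mk, h]
  simp [← mul_assoc, ← Finset.sum_mul, hab]

variable {A : Type*} [Ring A] [HopfAlgebra F A]

variable (F A) in
/-- A semisimple Hopf algebra has a normalized right integral. -/
lemma exists_rightIntegral [IsSemisimpleRing A] :
    ∃ Λ : A, (∀ x, Λ * x = counit (R := F) x • Λ) ∧ counit (R := F) Λ = 1 := by
  let N : Submodule Aᵐᵒᵖ A :=
    { carrier := {x | counit (R := F) x = 0}
      add_mem' := fun {x y} hx hy => by
        simp only [Set.mem_ofPred_eq] at hx hy ⊢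
        rw [map_add, hx, hy, add_zero]
      zero_mem' := by simp
      smul_mem' := fun c x hx => by
        simp only [Set.mem_ofPred_eq] at hx ⊢
        rw [MulOpposite.smul_eq_mul_unop, Bialgebra.counit_mul, hx, zero_mul] }
  have hmem : ∀ x, x ∈ N ↔ counit (R := F) x = 0 := fun x => Iff.rfl
  obtain ⟨N', hN'⟩ := exists_isCompl N
  obtain ⟨y, hy, Λ, hΛ, hsum⟩ := Submodule.mem_sup.mp
    (hN'.sup_eq_top ▸ Submodule.mem_top : (1 : A) ∈ N ⊔ N')
  have h1 : counit (R := F) Λ = 1 := by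
    have h := congr(counit (R := F) $hsum)
    rwa [map_add, (hmem y).mp hy, zero_add, Bialgebra.counit_one] at h
  refine ⟨Λ, fun x => ?_, h1⟩
  have h2 : Λ * x - counit (R := F) x • Λ ∈ N' := by
    refine sub_mem (N'.smul_mem (MulOpposite.op x) hΛ) ?_
    have h := N'.smul_mem (MulOpposite.op (algebraMap F A (counit (R := F) x))) hΛ
    rwa [MulOpposite.smul_eq_mul_unop, MulOpposite.unop_op, ← Algebra.commutes,
      ← Algebra.smul_def] at h
  have h3 : Λ * x - counit (R := F) x • Λ ∈ N := by
    rw [hmem]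
    simp [h1]
  exact sub_eq_zero.mp (Submodule.disjoint_def.mp hN'.disjoint _ h3 h2)

variable [FiniteDimensional F A] [IsSemisimpleRing A]

/-- The square of the antipode of a semisimple Hopf algebra has nonzero trace. -/
lemma traceIntegral_one_ne_zero [IsAlgClosed F] [CharZero F] : traceIntegral F A 1 ≠ 0 := by
  obtain ⟨Λ, hΛ, hΛ1⟩ := exists_rightIntegral F A
  have hlam := isLeftIntegral_traceIntegral (F := F) (A := A)
  have hlamΛ := traceIntegral_eq_one hΛ hΛ1
  obtain ⟨n, hn, hS⟩ := hlam.exists_antipode_pow_eq_one hΛ hlamΛ traceIntegral_mul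
  have h := trace_ne_zero_of_nakayama (antipode F ∘ₗ antipode F : A →ₗ[F] A) (traceIntegral F A)
    (fun y hy => hlam.eq_zero_of_forall_mul_right hΛ hlamΛ hy) traceIntegral_mul hn.ne' hS
    (Bialgebra.counitAlgHom F A)
  rw [traceIntegral_apply]
  convert h using 2
  ext x
  simp

/-- The dual of a semisimple Hopf algebra in characteristic zero is semisimple. -/
theorem isSemisimpleRing_dual [IsAlgClosed F] [CharZero F] :
    IsSemisimpleRing (WithConv (A →ₗ[F] F)) := by
  obtain ⟨Λ, hΛ, hΛ1⟩ := exists_rightIntegral F A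
  have hlam := isLeftIntegral_traceIntegral (F := F) (A := A)
  have hlamΛ := traceIntegral_eq_one hΛ hΛ1
  have h0 := traceIntegral_one_ne_zero (F := F) (A := A)
  set lam := traceIntegral F A with hlam_def
  let c : A →ₗ[F] A →ₗ[F] F := (lam 1)⁻¹ • ((LinearMap.mul F A).compr₂ lam).compl₂ (antipode F)
  have hc : ∀ x y, c x y = (lam 1)⁻¹ * lam (x * antipode F y) := fun x y => by simp [c]
  have hcS : ∀ x w, c x (antipode F w) = (lam 1)⁻¹ * lam (w * x) := fun x w => by
    rw [hc, traceIntegral_mul w]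
  have hcc : ∀ (f : A →ₗ[F] F) (x y : A),
      (toConv f * toConv (c.flip y)) x = (toConv (c x) * toConv f) y := by
    intro f x y
    obtain ⟨w, rfl⟩ := hlam.antipode_surjective hΛ hlamΛ y
    rw [(ℛ F x).convMul_apply, (reprAntipode (ℛ F w)).convMul_apply]
    have h := congr((lam 1)⁻¹ * f $(hlam.antipode_mul w x))
    rw [conv_mul_scalarConv_apply _ _ (ℛ F w), conv_mul_scalarConv_apply _ _ (ℛ F x)] at h
    simp only [map_sum, map_smul, Finset.mul_sum, LinearMap.comp_apply, LinearMap.mulLeft_apply,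
      LinearMap.mulRight_apply, LinearMap.id_apply, smul_eq_mul] at h
    simp only [LinearMap.flip_apply, hcS, reprAntipode]
    rw [Finset.sum_congr rfl fun i _ => mul_assoc _ _ _, h]
    exact Finset.sum_congr rfl fun i _ => by ring
  let b := Module.finBasis F A
  have hb : ∀ x y, ∑ i, c x (b i) * b.coord i y = c x y := by
    intro x y
    conv_rhs => rw [← b.sum_repr y, map_sum]
    simp [mul_comm]
  refine isSemisimpleRing_of_casimir (F := F) (fun i => toConv (c.flip (b i)))
    (fun i => toConv (b.coord i)) ?_ fun f => ?_
  · ext h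
    change (∑ i, toConv (c.flip (b i)) * toConv (b.coord i)).ofConv h = _
    rw [ofConv_sum, LinearMap.sum_apply]
    have h1 : ∀ i, (toConv (c.flip (b i)) * toConv (b.coord i)).ofConv h =
        ∑ j ∈ (ℛ F h).index, c ((ℛ F h).left j) (b i) * b.coord i ((ℛ F h).right j) :=
      fun i => (ℛ F h).convMul_apply _ _
    rw [Finset.sum_congr rfl fun i _ => h1 i, Finset.sum_comm]
    simp only [hb]
    simp only [hc]
    rw [← Finset.mul_sum, ← map_sum, sum_mul_antipode_eq_smul, map_smul]
    simp [mul_comm, h0]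
  · have hexp : ∀ g : WithConv (A →ₗ[F] F), g = ∑ j, g (b j) • toConv (b.coord j) := by
      intro g
      ext y
      change _ = (∑ j, g (b j) • toConv (b.coord j)).ofConv y
      rw [ofConv_sum, LinearMap.sum_apply]
      change g.ofConv y = _
      conv_lhs => rw [← b.sum_repr y, map_sum]
      refine Finset.sum_congr rfl fun j _ => ?_
      rw [map_smul, smul_eq_mul, mul_comm]
      rfl
    have hfa : ∀ j, f * toConv (c.flip (b j)) =
        ∑ i, (toConv (b.coord i) * f) (b j) • toConv (c.flip (b i)) := by
      intro j
      ext x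
      change _ = (∑ i, (toConv (b.coord i) * f) (b j) • toConv (c.flip (b i))).ofConv x
      rw [ofConv_sum, LinearMap.sum_apply]
      refine (hcc f.ofConv x (b j)).trans ?_
      have h1 : ∀ i, ((toConv (b.coord i) * f) (b j) • toConv (c.flip (b i))).ofConv x =
          ∑ l ∈ (ℛ F (b j)).index, c x (b i) * b.coord i ((ℛ F (b j)).left l) *
            f ((ℛ F (b j)).right l) := by
        intro i
        change (toConv (b.coord i) * f) (b j) * c x (b i) = _
        rw [(ℛ F (b j)).convMul_apply, Finset.sum_mul]
        exact Finset.sum_congr rfl fun l _ => by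
          simp only
          ring
      rw [(ℛ F (b j)).convMul_apply, Finset.sum_congr rfl fun i _ => h1 i, Finset.sum_comm]
      refine Finset.sum_congr rfl fun l _ => ?_
      rw [← Finset.sum_mul, hb]
    calc ∑ j, (f * toConv (c.flip (b j))) ⊗ₜ[F] toConv (b.coord j)
        = ∑ j, ∑ i, toConv (c.flip (b i)) ⊗ₜ[F]
            ((toConv (b.coord i) * f) (b j) • toConv (b.coord j)) := by
          refine Finset.sum_congr rfl fun j _ => ?_
          rw [hfa j, TensorProduct.sum_tmul]
          exact Finset.sum_congr rfl fun i _ => TensorProduct.smul_tmul _ _ _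
      _ = ∑ i, toConv (c.flip (b i)) ⊗ₜ[F] (toConv (b.coord i) * f) := by
          rw [Finset.sum_comm]
          refine Finset.sum_congr rfl fun i _ => ?_
          rw [← TensorProduct.tmul_sum, ← hexp]

end Semisimple

section SimpleSubcoalgebras

open Coalgebra WithConv

section KerCoannihilator

variable {F A : Type*} [Field F] [Ring A] [HopfAlgebra F A]

lemma mul'_map_comul (f g : A →ₗ[F] F) (x : A) :
    LinearMap.mul' F F (TensorProduct.map f g (comul (R := F) x)) = (toConv f * toConv g) x :=
  rfl

variable {R : Type*} [Ring R] [Algebra F R] (φ : WithConv (A →ₗ[F] F) →ₐ[F] R)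

/-- The subspace of `A` annihilated by the kernel of an algebra map out of the dual of `A`. -/
def kerCoannihilator : Submodule F A :=
  Submodule.dualCoannihilator
    (LinearMap.ker (φ.toLinearMap ∘ₗ (WithConv.linearEquiv F (A →ₗ[F] F)).symm.toLinearMap))

variable {φ}

lemma mem_kerCoannihilator {x : A} :
    x ∈ kerCoannihilator φ ↔ ∀ f : A →ₗ[F] F, φ (toConv f) = 0 → f x = 0 :=
  Submodule.mem_dualCoannihilator _

lemma map_toConv_eq_zero_of_kerCoannihilator [FiniteDimensional F A] {f : A →ₗ[F] F}
    (hf : ∀ x ∈ kerCoannihilator φ, f x = 0) : φ (toConv f) = 0 := by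
  have h := (Submodule.mem_dualAnnihilator (W := kerCoannihilator φ) f).mpr hf
  rw [kerCoannihilator, Subspace.dualCoannihilator_dualAnnihilator_eq] at h
  exact h

end KerCoannihilator

variable {F A : Type} [Field F] [Ring A] [HopfAlgebra F A]

/-- Elements of `D ⊗ D` are killed by `f ⊗ g` as soon as `f` or `g` vanishes on `D`. -/
lemma IsSubcoalgebra.convMul_apply_eq_zero {D : Submodule F A} (hD : IsSubcoalgebra F A D)
    {f g : A →ₗ[F] F} (hfg : (∀ x ∈ D, f x = 0) ∨ ∀ x ∈ D, g x = 0) {x : A} (hx : x ∈ D) :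
    (toConv f * toConv g) x = 0 := by
  rw [← mul'_map_comul]
  obtain ⟨z, hz⟩ := hD x hx
  rw [← hz]
  clear hz
  induction z with
  | zero => simp
  | add y z hy hz => rw [map_add, map_add, map_add, hy, hz, add_zero]
  | tmul y z => rcases hfg with h | h <;> simp [h]

variable [FiniteDimensional F A]

lemma isSubcoalgebra_of_forall_convMul {C : Submodule F A}
    (hC : ∀ f g : A →ₗ[F] F, ((∀ x ∈ C, f x = 0) ∨ ∀ x ∈ C, g x = 0) →
      ∀ x ∈ C, (toConv f * toConv g) x = 0) : IsSubcoalgebra F A C := by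
  intro x hx
  obtain ⟨p, hp⟩ := LinearMap.exists_leftInverse_of_injective C.subtype (Submodule.ker_subtype _)
  have hp' : ∀ x (hx : x ∈ C), (p x : A) = x := fun x hx => congr(($hp ⟨x, hx⟩ : A))
  let q : A →ₗ[F] A := C.subtype ∘ₗ p
  refine ⟨TensorProduct.map p p (comul x), ?_⟩
  have h1 : ∀ f g : A →ₗ[F] F, (toConv (f ∘ₗ q) * toConv g) x = (toConv f * toConv g) x := by
    intro f g
    have h := hC (f ∘ₗ q - f) g (Or.inl fun y hy => by simp [q, hp' y hy]) x hx
    rwa [toConv_sub, sub_mul, ofConv_sub, LinearMap.sub_apply, sub_eq_zero] at h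
  have h2 : ∀ f g : A →ₗ[F] F, (toConv f * toConv (g ∘ₗ q)) x = (toConv f * toConv g) x := by
    intro f g
    have h := hC f (g ∘ₗ q - g) (Or.inr fun y hy => by simp [q, hp' y hy]) x hx
    rwa [toConv_sub, mul_sub, ofConv_sub, LinearMap.sub_apply, sub_eq_zero] at h
  refine eq_of_forall_map_dual fun f g => ?_
  rw [mul'_map_comul, ← h1, ← h2, ← mul'_map_comul, TensorProduct.map_comp, TensorProduct.map_comp]
  rfl

variable {R : Type*} [Ring R] [Algebra F R] {φ : WithConv (A →ₗ[F] F) →ₐ[F] R}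

lemma isSubcoalgebra_kerCoannihilator : IsSubcoalgebra F A (kerCoannihilator φ) := by
  refine isSubcoalgebra_of_forall_convMul fun f g hfg x hx => ?_
  refine mem_kerCoannihilator.mp hx (toConv f * toConv g).ofConv ?_
  rw [toConv_ofConv, map_mul]
  rcases hfg with h | h <;> simp [map_toConv_eq_zero_of_kerCoannihilator h]

lemma isSimpleSubcoalgebra_kerCoannihilator [IsSimpleRing R] (hφ : Function.Surjective φ) :
    IsSimpleSubcoalgebra F A (kerCoannihilator φ) := by
  refine ⟨isSubcoalgebra_kerCoannihilator, fun h => ?_, fun D hDC hD hD0 => ?_⟩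
  · have h1 : φ (toConv (ofConv (1 : WithConv (A →ₗ[F] F)))) = 0 :=
      map_toConv_eq_zero_of_kerCoannihilator fun x hx => by
        rw [h, Submodule.mem_bot] at hx
        rw [hx, map_zero]
    rw [toConv_ofConv, map_one] at h1
    exact one_ne_zero h1
  let J : TwoSidedIdeal R := TwoSidedIdeal.mk' {r | ∃ f : A →ₗ[F] F, (∀ x ∈ D, f x = 0) ∧
      φ (toConv f) = r}
    ⟨0, by simp, by simp⟩
    (by
      rintro _ _ ⟨f, hf, rfl⟩ ⟨g, hg, rfl⟩
      exact ⟨f + g, fun x hx => by simp [hf x hx, hg x hx], by simp⟩)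
    (by
      rintro _ ⟨f, hf, rfl⟩
      exact ⟨-f, fun x hx => by simp [hf x hx], by simp⟩)
    (by
      rintro r _ ⟨f, hf, rfl⟩
      obtain ⟨g, rfl⟩ := hφ r
      exact ⟨(g * toConv f).ofConv, fun x hx => hD.convMul_apply_eq_zero (Or.inr hf) hx,
        by simp⟩)
    (by
      rintro _ r ⟨f, hf, rfl⟩
      obtain ⟨g, rfl⟩ := hφ r
      exact ⟨(toConv f * g).ofConv, fun x hx => hD.convMul_apply_eq_zero (Or.inl hf) hx,
        by simp⟩)
  have hJ : ∀ r, r ∈ J ↔ ∃ f : A →ₗ[F] F, (∀ x ∈ D, f x = 0) ∧ φ (toConv f) = r :=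
    fun r => TwoSidedIdeal.mem_mk' _ _ _ _ _ _ _
  rcases eq_bot_or_eq_top J with hbot | htop
  · refine le_antisymm hDC fun x hx => ?_
    by_contra hxD
    obtain ⟨f, hfx, hf⟩ := Submodule.exists_le_ker_of_notMem hxD
    refine hfx (mem_kerCoannihilator.mp hx f ?_)
    rw [← TwoSidedIdeal.mem_bot, ← hbot, hJ]
    exact ⟨f, fun y hy => hf hy, rfl⟩
  · refine absurd ((Submodule.eq_bot_iff D).mpr fun x hx => ?_) hD0
    refine (Module.forall_dual_apply_eq_zero_iff F x).mp fun g => ?_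
    obtain ⟨f, hf, hfg⟩ := (hJ (φ (toConv g))).mp (htop ▸ trivial)
    have h := mem_kerCoannihilator.mp (hDC hx) (g - f) (by simp [hfg])
    rwa [LinearMap.sub_apply, hf x hx, sub_zero] at h

variable (F A) in
/-- A finite-dimensional semisimple Hopf algebra over an algebraically closed field of
characteristic zero is spanned by its simple subcoalgebras. -/
theorem sSup_isSimpleSubcoalgebra_eq_top [CharZero F] [IsAlgClosed F] [IsSemisimpleRing A] :
    sSup {C : Submodule F A | IsSimpleSubcoalgebra F A C} = ⊤ := by
  have := isSemisimpleRing_dual (F := F) (A := A)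
  have : FiniteDimensional F (WithConv (A →ₗ[F] F)) :=
    Module.Finite.equiv (WithConv.linearEquiv F (A →ₗ[F] F)).symm
  obtain ⟨n, d, hd, ⟨e⟩⟩ :=
    IsSemisimpleRing.exists_algEquiv_pi_matrix_of_isAlgClosed F (WithConv (A →ₗ[F] F))
  refine eq_top_iff.mpr fun x _ => ?_
  by_contra hx
  obtain ⟨f, hfx, hf⟩ := Submodule.exists_le_ker_of_notMem hx
  have h : toConv f = 0 := by
    refine (map_eq_zero_iff e e.injective).mp (funext fun i => ?_)
    let φ := (Pi.evalAlgHom F (fun i => Matrix (Fin (d i)) (Fin (d i)) F) i).comp e.toAlgHom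
    have hφ : Function.Surjective φ := (Function.surjective_eval i).comp e.surjective
    exact map_toConv_eq_zero_of_kerCoannihilator (φ := φ) fun y hy =>
      hf (le_sSup (a := kerCoannihilator φ)
        (Set.mem_ofPred_eq ▸ isSimpleSubcoalgebra_kerCoannihilator hφ) hy)
  exact hfx (by rw [toConv_injective (h.trans toConv_zero.symm), LinearMap.zero_apply])

end SimpleSubcoalgebras

section MackeyMap

variable {F A : Type} [Field F] [Ring A] [HopfAlgebra F A] (L K : Subalgebra F A) (Λ : A)
variable (M : Type v) [AddCommGroup M] [Module F M] [Module ↥K M]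

/-- The class of `h ⊗ m` in the induced module. -/
def indMk : A →ₗ[F] M →ₗ[F] Ind F A K M :=
  (TensorProduct.mk F A M).compr₂ ((indRel F A K M).mkQ.restrictScalars F)

lemma indMk_apply (h : A) (m : M) :
    indMk K M h m = Submodule.Quotient.mk (h ⊗ₜ[F] m) := rfl

lemma indMk_mul (h : A) (a : K) (m : M) : indMk K M (h * a) m = indMk K M h (a • m) := by
  rw [indMk_apply, indMk_apply, Submodule.Quotient.eq]
  have := (indRel F A K M).smul_mem h (Submodule.subset_span ⟨a, m, rfl⟩)
  rwa [smul_sub, TensorProduct.smul_tmul', TensorProduct.smul_tmul', smul_eq_mul, smul_eq_mul,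
    mul_one] at this

/-- The multiplication map `L ⊗ (CK ⊗ M) → A ⊗_K M`. -/
def lcmToInd (C : Submodule F A) : LCM F A L K C M →ₗ[F] Ind F A K M :=
  TensorProduct.lift (indMk K M) ∘ₗ
    LinearMap.rTensor M
      (LinearMap.mul' F A ∘ₗ TensorProduct.map L.val.toLinearMap (CKsub F A K C).subtype) ∘ₗ
    (TensorProduct.assoc F L (CKsub F A K C) M).symm.toLinearMap

lemma lcmToInd_lcmk (C : Submodule F A) (l : L) (x : CKsub F A K C) (m : M) :
    lcmToInd L K M C (lcmk F A L K C M l (ckmk F A K M C x m)) = indMk K M ((l : A) * x) m :=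
  rfl

lemma compRel_le_ker (C : Submodule F A) :
    compRel F A L K Λ C M ≤ LinearMap.ker (lcmToInd L K M C) := by
  refine Submodule.span_le.mpr ?_
  rintro _ (⟨l, a, haL, -, x, m, hax, rfl⟩ | ⟨l, x, a, m, hxa, rfl⟩)
  · rw [SetLike.mem_coe, LinearMap.mem_ker, map_sub, lcmToInd_lcmk, lcmToInd_lcmk, mul_assoc,
      sub_self]
  · rw [SetLike.mem_coe, LinearMap.mem_ker, map_sub, lcmToInd_lcmk, lcmToInd_lcmk, ← mul_assoc,
      indMk_mul, sub_self]

/-- The canonical map `⊕_C L ⊗_{L ∩ ᶜK} ᶜM → A ⊗_K M`, `l ⊗ v ↦ l v`. -/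
def mackeyMap {ι : Type} [DecidableEq ι] (rep : ι → Submodule F A) :
    (⨁ i : ι, Comp F A L K Λ (rep i) M) →ₗ[F] Ind F A K M :=
  DirectSum.toModule F ι _ fun i =>
    (compRel F A L K Λ (rep i) M).liftQ (lcmToInd L K M (rep i)) (compRel_le_ker L K Λ M (rep i))

lemma mackeyMap_of {ι : Type} [DecidableEq ι] (rep : ι → Submodule F A) (i : ι) (l : L)
    (x : CKsub F A K (rep i)) (m : M) :
    mackeyMap L K Λ M rep (DirectSum.of (fun i => Comp F A L K Λ (rep i) M) i
      (Submodule.Quotient.mk (lcmk F A L K (rep i) M l (ckmk F A K M (rep i) x m)))) =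
      indMk K M ((l : A) * x) m :=
  (DirectSum.toModule_lof F i _).trans (lcmToInd_lcmk L K M (rep i) l x m)

lemma mackeyMap_surjective {ι : Type} [DecidableEq ι] (rep : ι → Submodule F A)
    (hrep : IsDoubleCosetReps F A L K rep)
    (hspan : sSup {C : Submodule F A | IsSimpleSubcoalgebra F A C} = ⊤) :
    Function.Surjective (mackeyMap L K Λ M rep) := by
  have htop : (⊤ : Submodule F A) ≤ ⨆ i, L.toSubmodule * rep i * K.toSubmodule := by
    rw [← hspan]
    refine sSup_le fun C hC => ?_
    obtain ⟨i, hi⟩ := hrep.2.2 C hC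
    exact hi.trans (le_iSup (fun i => L.toSubmodule * rep i * K.toSubmodule) i)
  have hmem : ∀ (m : M) (h : A), indMk K M h m ∈ LinearMap.range (mackeyMap L K Λ M rep) := by
    intro m h
    suffices hle : ⨆ i, L.toSubmodule * rep i * K.toSubmodule ≤
        (LinearMap.range (mackeyMap L K Λ M rep)).comap ((indMk K M).flip m) from
      hle (htop Submodule.mem_top)
    refine iSup_le fun i => ?_
    rw [mul_assoc, Submodule.mul_le]
    intro l hl x hx
    exact ⟨_, mackeyMap_of L K Λ M rep i ⟨l, hl⟩ ⟨x, hx⟩ m⟩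
  intro z
  obtain ⟨t, rfl⟩ := Submodule.Quotient.mk_surjective _ z
  change Submodule.Quotient.mk t ∈ LinearMap.range (mackeyMap L K Λ M rep)
  induction t with
  | zero => exact zero_mem _
  | add y z hy hz => exact add_mem hy hz
  | tmul h m => exact hmem m h

end MackeyMap

section Statements

variable [FiniteDimensional k H] [IsSemisimpleRing H]

/-- Theorem 4: let `L` and `K` be Hopf subalgebras of the
semisimple Hopf algebra `H`.  For any finite-dimensional left `K`-module `M`
there is a canonical epimorphism of `L`-modules
`π_M : ⊕_{C ∈ L\H/K} L ⊗_{L ∩ ᶜK} ᶜM → M↑_K^H↓_L^H` given on the component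
indexed by `C` by `l ⊗ v ↦ l·v`.  (A `k`-linear map satisfying the displayed
formula on the spanning elements is automatically `L`-equivariant for the
evident `L`-actions.) -/
theorem statement_1 (L K : Subalgebra k H)
    (hL : IsHopfSubalgebra k H L) (hK : IsHopfSubalgebra k H K)
    (Λ : H) (hΛ : IsIdempotentIntegral k H K Λ)
    (M : Type v) [AddCommGroup M] [Module k M] [Module ↥K M]
    [IsScalarTower k ↥K M] [Module.Finite k M]
    (ι : Type) [DecidableEq ι] (rep : ι → Submodule k H)
    (hrep : IsDoubleCosetReps k H L K rep) :
    ∃ π : (⨁ i : ι, Comp k H L K Λ (rep i) M) →ₗ[k] Ind k H K M,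
      Function.Surjective π ∧
      ∀ (i : ι) (l : ↥L) (x : ↥(CKsub k H K (rep i))) (m : M),
        π (DirectSum.of (fun i => Comp k H L K Λ (rep i) M) i
            (Submodule.Quotient.mk
              (lcmk k H L K (rep i) M l (ckmk k H K M (rep i) x m)))) =
          Submodule.Quotient.mk (((l : H) * (x : H)) ⊗ₜ[k] m) := by
  exact ⟨mackeyMap L K Λ M rep,
    mackeyMap_surjective L K Λ M rep hrep (sSup_isSimpleSubcoalgebra_eq_top k H),
    mackeyMap_of L K Λ M rep⟩

end Statements

end

end MackeyPaper
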